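/- Fix a real constant 0 < c < 1. There exists a constant q = q(c) > 0 such that the following holds for n ranging over values with cn ∈ ℕ, t = cn and t' = t − 1: if p_n = 1 − exp(−α(c)/(1−c) − q·(log n)/((1−c)n)) and Δ ∼ RP(n,t,p_n), then the probability that Δ has a complete t'-skeleton tends to 1; if instead p_n = 1 − exp(−α(c)/(1−c) + q·(log n)/((1−c)n)), then the probability that Δ has a complete t'-skeleton tends to 0. -/

import Mathlib

open scoped Classical

noncomputable section

/-- The natural-log entropy function `α(c)`. -/
def entropy (c : ℝ) : ℝ := -c * Real.log c - (1 - c) * Real.log (1 - c)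

/-- The simplicial complex generated by a family `F` of facets: all nonempty
subsets of members of `F`. -/
def genComplex {n : ℕ} (F : Finset (Finset (Fin n))) : Finset (Finset (Fin n)) :=
  Finset.univ.filter (fun x => x.Nonempty ∧ ∃ f ∈ F, x ⊆ f)

/-- The probability, under the random pure model `RP(n,t,p)` (each `t`-subset of
`[n]` is taken as a facet independently with probability `p`), of the event `P`
for the generated complex. -/
def rpProb (n t : ℕ) (p : ℝ) (P : Finset (Finset (Fin n)) → Prop) : ℝ :=
  ∑ F ∈ (Finset.univ.filter (fun s : Finset (Fin n) => s.card = t)).powerset,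
    (if P (genComplex F) then p ^ F.card * (1 - p) ^ (Nat.choose n t - F.card) else 0)

open Filter Finset
open scoped FinsetFamily Topology

/-!
A `(t - 1)`-set is missed by `Δ` exactly when none of the `n - t + 1` many `t`-sets containing it is
a facet, so the expected number of missed `(t - 1)`-sets is `μ = C(n, t - 1) (1 - p) ^ (n - t + 1)`.
Up to polynomial factors in `n`, `C(n, t)` is `exp (n α(c))`, because the mode of a binomial
distribution carries mass at least `1 / (n + 1)`. With
`1 - p = exp (-α(c) / (1 - c) ± q log n / ((1 - c) n))` the exponential factors cancel and `μ` is
`n ^ (± q)` up to polynomial factors. If `μ → 0`, Markov's inequality applies. If `μ` is large,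
Chebyshev's inequality applies: the events that two given `(t - 1)`-sets are missed are independent
unless the sets lie in a common `t`-set, so the variance of the number of missed sets is at most
`n² μ`.
-/

section BernoulliSubset

variable {β : Type*} {U : Finset β} {p : ℝ}

/-- The probability that the random subset of `U` which contains each element independently with
probability `p` is equal to `F`; meaningful only for `F ⊆ U`. -/
def bernoulliWeight (U : Finset β) (p : ℝ) (F : Finset β) : ℝ :=
  p ^ #F * (1 - p) ^ (#U - #F)

/-- The expectation functional of the random subset of `U` which contains each element
independently with probability `p`, as a linear map on all real functions of the subset. -/
def bernoulliMean (U : Finset β) (p : ℝ) : (Finset β → ℝ) →ₗ[ℝ] ℝ :=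
  ∑ F ∈ U.powerset, bernoulliWeight U p F • LinearMap.proj F

/-- The probability that the random subset of `U` which contains each element independently with
probability `p` belongs to `E`. -/
def bernoulliProb (U : Finset β) (p : ℝ) (E : Set (Finset β)) : ℝ :=
  bernoulliMean U p (E.indicator 1)

lemma bernoulliWeight_nonneg (hp : p ∈ Set.Icc 0 1) (F : Finset β) :
    0 ≤ bernoulliWeight U p F :=
  mul_nonneg (pow_nonneg hp.1 _) (pow_nonneg (sub_nonneg.2 hp.2) _)

lemma bernoulliMean_apply (U : Finset β) (p : ℝ) (X : Finset β → ℝ) :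
    bernoulliMean U p X = ∑ F ∈ U.powerset, bernoulliWeight U p F * X F := by
  simp [bernoulliMean]

lemma bernoulliMean_one (U : Finset β) (p : ℝ) : bernoulliMean U p 1 = 1 := by
  simp [bernoulliMean_apply, bernoulliWeight, sum_pow_mul_eq_add_pow]

lemma bernoulliMean_mono (hp : p ∈ Set.Icc 0 1) {X Y : Finset β → ℝ}
    (hXY : ∀ F ⊆ U, X F ≤ Y F) : bernoulliMean U p X ≤ bernoulliMean U p Y := by
  simp only [bernoulliMean_apply]
  exact sum_le_sum fun F hF =>
    mul_le_mul_of_nonneg_left (hXY F (mem_powerset.1 hF)) (bernoulliWeight_nonneg hp F)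

lemma bernoulliProb_nonneg (hp : p ∈ Set.Icc 0 1) (E : Set (Finset β)) :
    0 ≤ bernoulliProb U p E := by
  rw [← map_zero (bernoulliMean U p)]
  exact bernoulliMean_mono hp fun F _ => Set.indicator_nonneg (fun _ _ => zero_le_one) F

lemma bernoulliProb_mono (hp : p ∈ Set.Icc 0 1) {E E' : Set (Finset β)}
    (hE : ∀ F ⊆ U, F ∈ E → F ∈ E') : bernoulliProb U p E ≤ bernoulliProb U p E' := by
  refine bernoulliMean_mono hp fun F hF => ?_
  by_cases hFE : F ∈ E
  · simp [hFE, hE F hF hFE]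
  · rw [Set.indicator_of_notMem hFE]
    exact Set.indicator_nonneg (fun _ _ => zero_le_one) F

lemma bernoulliProb_disjoint {S : Finset β} (hS : S ⊆ U) (p : ℝ) :
    bernoulliProb U p {F | Disjoint F S} = (1 - p) ^ #S := by
  have filter_disjoint : {F ∈ U.powerset | Disjoint F S} = (U \ S).powerset := by
    ext F
    simp only [mem_filter, mem_powerset, subset_sdiff]
  have weight_split : ∀ F ∈ (U \ S).powerset,
      bernoulliWeight U p F = (1 - p) ^ #S * (p ^ #F * (1 - p) ^ (#(U \ S) - #F)) := by
    intro F hF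
    have hFS := card_le_card (mem_powerset.1 hF)
    have hUS := card_sdiff_add_card_eq_card hS
    rw [bernoulliWeight, show #U - #F = #S + (#(U \ S) - #F) by omega, pow_add]
    ring
  calc bernoulliProb U p {F | Disjoint F S}
      = ∑ F ∈ U.powerset with Disjoint F S, bernoulliWeight U p F := by
        simp [bernoulliProb, bernoulliMean_apply, Set.indicator_apply, sum_filter]
    _ = (1 - p) ^ #S := by
        rw [filter_disjoint, sum_congr rfl weight_split, ← mul_sum, sum_pow_mul_eq_add_pow]
        simp

lemma bernoulliProb_eq_zero_mul_sq_le_variance (hp : p ∈ Set.Icc 0 1) (X : Finset β → ℝ) :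
    bernoulliProb U p {F | X F = 0} * bernoulliMean U p X ^ 2 ≤
      bernoulliMean U p (X ^ 2) - bernoulliMean U p X ^ 2 := by
  set μ := bernoulliMean U p X
  calc bernoulliProb U p {F | X F = 0} * μ ^ 2
      = bernoulliMean U p (μ ^ 2 • {F | X F = 0}.indicator 1) := by
        rw [map_smul, smul_eq_mul, mul_comm, bernoulliProb]
    _ ≤ bernoulliMean U p (X ^ 2 - (2 * μ) • X + μ ^ 2 • 1) := by
        refine bernoulliMean_mono hp fun F _ => ?_
        by_cases hF : X F = 0
        · simp [hF]
        · simp only [Pi.smul_apply, Pi.add_apply, Pi.sub_apply, Pi.pow_apply, Pi.one_apply,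
            smul_eq_mul, Set.indicator_of_notMem (s := {F | X F = 0}) hF]
          nlinarith [sq_nonneg (X F - μ)]
    _ = bernoulliMean U p (X ^ 2) - μ ^ 2 := by
        simp only [map_add, map_sub, map_smul, bernoulliMean_one, smul_eq_mul]
        ring

end BernoulliSubset

section Hitting

variable {β ι : Type*} {U : Finset β} {p : ℝ} {I : Finset ι} {S : ι → Finset β}

/-- The sets that meet every member of the family `S`, indexed by `I`. -/
def hittingSets (I : Finset ι) (S : ι → Finset β) : Set (Finset β) :=
  {F | ∀ i ∈ I, ¬ Disjoint F (S i)}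

/-- The number of members of the family `S`, indexed by `I`, that a set misses; it is real-valued
and written as a sum of indicators so that the expectation can be taken termwise. -/
def missCount (I : Finset ι) (S : ι → Finset β) : Finset β → ℝ :=
  ∑ i ∈ I, {F | Disjoint F (S i)}.indicator 1

lemma missCount_apply (I : Finset ι) (S : ι → Finset β) (F : Finset β) :
    missCount I S F = #{i ∈ I | Disjoint F (S i)} := by
  simp [missCount, Set.indicator_apply]

lemma missCount_eq_zero_iff {F : Finset β} : missCount I S F = 0 ↔ F ∈ hittingSets I S := by
  simp [missCount_apply, hittingSets, filter_eq_empty_iff]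

lemma one_le_missCount {F : Finset β} (hF : F ∉ hittingSets I S) : 1 ≤ missCount I S F := by
  rw [← missCount_eq_zero_iff, missCount_apply, Nat.cast_eq_zero] at hF
  rw [missCount_apply]
  exact_mod_cast Nat.one_le_iff_ne_zero.2 hF

lemma bernoulliMean_missCount (hS : ∀ i ∈ I, S i ⊆ U) (p : ℝ) :
    bernoulliMean U p (missCount I S) = ∑ i ∈ I, (1 - p) ^ #(S i) := by
  rw [missCount, map_sum]
  exact sum_congr rfl fun i hi => bernoulliProb_disjoint (hS i hi) p

lemma one_sub_mean_missCount_le_prob_hittingSets (hp : p ∈ Set.Icc 0 1) :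
    1 - bernoulliMean U p (missCount I S) ≤ bernoulliProb U p (hittingSets I S) := by
  rw [← bernoulliMean_one U p, ← map_sub]
  refine bernoulliMean_mono hp fun F _ => ?_
  by_cases hF : F ∈ hittingSets I S
  · simp [hF, missCount_eq_zero_iff.2 hF]
  · simpa [hF] using one_le_missCount hF

variable [DecidableEq β]

lemma bernoulliMean_missCount_sq (hS : ∀ i ∈ I, S i ⊆ U) (p : ℝ) :
    bernoulliMean U p (missCount I S ^ 2) = ∑ i ∈ I, ∑ j ∈ I, (1 - p) ^ #(S i ∪ S j) := by
  have indicator_mul (i j : ι) :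
      ({F | Disjoint F (S i)}.indicator 1 * {F | Disjoint F (S j)}.indicator 1 : Finset β → ℝ) =
        {F | Disjoint F (S i ∪ S j)}.indicator 1 := by
    rw [← Set.inter_indicator_one]
    simp only [disjoint_union_right, Set.ofPred_and]
  simp only [missCount, sq, sum_mul_sum, indicator_mul, map_sum]
  exact sum_congr rfl fun i hi => sum_congr rfl fun j hj =>
    bernoulliProb_disjoint (union_subset (hS i hi) (hS j hj)) p

lemma pow_card_union_le {r : ℝ} (hr : r ∈ Set.Icc 0 1) (A B : Finset β) :
    r ^ #(A ∪ B) ≤ r ^ #A * r ^ #B + if ¬ Disjoint A B then r ^ #A else 0 := by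
  by_cases hAB : Disjoint A B
  · simp [hAB, card_union_of_disjoint hAB, pow_add]
  · rw [if_pos hAB]
    calc r ^ #(A ∪ B) ≤ r ^ #A :=
          pow_le_pow_of_le_one hr.1 hr.2 (card_le_card subset_union_left)
      _ ≤ r ^ #A * r ^ #B + r ^ #A :=
          le_add_of_nonneg_left (mul_nonneg (pow_nonneg hr.1 _) (pow_nonneg hr.1 _))

lemma variance_missCount_le (hp : p ∈ Set.Icc 0 1) (hS : ∀ i ∈ I, S i ⊆ U) {D : ℕ}
    (hD : ∀ i ∈ I, #{j ∈ I | ¬ Disjoint (S i) (S j)} ≤ D) :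
    bernoulliMean U p (missCount I S ^ 2) - bernoulliMean U p (missCount I S) ^ 2 ≤
      D * bernoulliMean U p (missCount I S) := by
  have hr : 1 - p ∈ Set.Icc (0 : ℝ) 1 := ⟨sub_nonneg.2 hp.2, sub_le_self _ hp.1⟩
  rw [bernoulliMean_missCount_sq hS, bernoulliMean_missCount hS, sub_le_iff_le_add', sq,
    sum_mul_sum, mul_sum, ← sum_add_distrib]
  refine sum_le_sum fun i hi => ?_
  calc ∑ j ∈ I, (1 - p) ^ #(S i ∪ S j)
      ≤ ∑ j ∈ I, ((1 - p) ^ #(S i) * (1 - p) ^ #(S j) +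
          if ¬ Disjoint (S i) (S j) then (1 - p) ^ #(S i) else 0) :=
        sum_le_sum fun j _ => pow_card_union_le hr (S i) (S j)
    _ = ∑ j ∈ I, (1 - p) ^ #(S i) * (1 - p) ^ #(S j) +
          #{j ∈ I | ¬ Disjoint (S i) (S j)} * (1 - p) ^ #(S i) := by
        rw [sum_add_distrib, ← sum_filter, sum_const, nsmul_eq_mul]
    _ ≤ ∑ j ∈ I, (1 - p) ^ #(S i) * (1 - p) ^ #(S j) + D * (1 - p) ^ #(S i) := by
        gcongr
        · exact pow_nonneg hr.1 _
        · exact hD i hi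

lemma prob_hittingSets_mul_mean_missCount_le (hp : p ∈ Set.Icc 0 1) (hS : ∀ i ∈ I, S i ⊆ U) {D : ℕ}
    (hD : ∀ i ∈ I, #{j ∈ I | ¬ Disjoint (S i) (S j)} ≤ D) :
    bernoulliProb U p (hittingSets I S) * bernoulliMean U p (missCount I S) ≤ D := by
  have hμ : 0 ≤ bernoulliMean U p (missCount I S) := by
    rw [bernoulliMean_missCount hS]
    exact sum_nonneg fun i _ => pow_nonneg (sub_nonneg.2 hp.2) _
  rcases hμ.eq_or_lt with hμ | hμ
  · simp [← hμ]
  refine le_of_mul_le_mul_right ?_ hμ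
  have chebyshev := bernoulliProb_eq_zero_mul_sq_le_variance (U := U) hp (missCount I S)
  simp only [missCount_eq_zero_iff, Set.ofPred_mem_eq] at chebyshev
  calc bernoulliProb U p (hittingSets I S) * bernoulliMean U p (missCount I S) *
        bernoulliMean U p (missCount I S)
      = bernoulliProb U p (hittingSets I S) * bernoulliMean U p (missCount I S) ^ 2 := by ring
    _ ≤ D * bernoulliMean U p (missCount I S) := chebyshev.trans (variance_missCount_le hp hS hD)

end Hitting

section UpShadow

variable {α : Type*} [Fintype α] [DecidableEq α]

lemma mem_upShadow_singleton {x s : Finset α} : s ∈ ∂⁺ {x} ↔ x ⊆ s ∧ #s = #x + 1 := by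
  simp [mem_upShadow_iff_exists_mem_card_add_one]

lemma card_upShadow_singleton (x : Finset α) : #(∂⁺ {x}) = Fintype.card α - #x := by
  have upShadow_eq_image : ∂⁺ {x} = xᶜ.image (insert · x) := by simp [upShadow]
  rw [upShadow_eq_image, card_image_of_injOn, card_compl]
  simpa using insert_inj_on' x

/-- A set sharing a cover with `x` arises from `x` by inserting one element and erasing one. -/
lemma card_filter_not_disjoint_upShadow_le (I : Finset (Finset α)) (x : Finset α) :
    #{y ∈ I | ¬ Disjoint (∂⁺ {x}) (∂⁺ {y})} ≤ Fintype.card α ^ 2 := by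
  have subset_image : {y ∈ I | ¬ Disjoint (∂⁺ {x}) (∂⁺ {y})} ⊆
      (univ : Finset (α × α)).image fun ab => (insert ab.1 x).erase ab.2 := by
    intro y hy
    obtain ⟨s, hxs, hys⟩ := not_disjoint_iff.1 (mem_filter.1 hy).2
    simp only [mem_upShadow_iff, mem_singleton, exists_eq_left] at hxs hys
    obtain ⟨a, -, rfl⟩ := hxs
    obtain ⟨b, hb, hbs⟩ := hys
    exact mem_image.2 ⟨(a, b), mem_univ _, by rw [← hbs, erase_insert hb]⟩
  refine (card_le_card subset_image).trans (card_image_le.trans_eq ?_)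
  rw [card_univ, Fintype.card_prod, sq]

end UpShadow

section RandomPureComplex

variable {n k : ℕ} {p : ℝ}

/-- `Δ` has a complete `k`-skeleton. As in the informal statement, `k` bounds the cardinality of the
faces, not their dimension. -/
def HasCompleteSkeleton (k : ℕ) (Δ : Finset (Finset (Fin n))) : Prop :=
  ∀ x : Finset (Fin n), x.Nonempty → #x ≤ k → x ∈ Δ

lemma mem_genComplex {F : Finset (Finset (Fin n))} {x : Finset (Fin n)} :
    x ∈ genComplex F ↔ x.Nonempty ∧ ∃ f ∈ F, x ⊆ f := by
  simp [genComplex]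

lemma hasCompleteSkeleton_of_mem_hittingSets (hk : k ≤ n) {F : Finset (Finset (Fin n))}
    (hF : F ∈ hittingSets (powersetCard k univ) fun y => ∂⁺ {y}) :
    HasCompleteSkeleton k (genComplex F) := by
  intro x hx hxk
  obtain ⟨y, hxy, hy⟩ := exists_superset_card_eq hxk (by simpa using hk)
  obtain ⟨f, hfF, hf⟩ := not_disjoint_iff.1 (hF y (by simpa using hy))
  exact mem_genComplex.2 ⟨hx, f, hfF, hxy.trans (mem_upShadow_singleton.1 hf).1⟩

lemma mem_hittingSets_of_hasCompleteSkeleton (hk : 0 < k) {F : Finset (Finset (Fin n))}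
    (hF : F ⊆ powersetCard (k + 1) univ) (hskel : HasCompleteSkeleton k (genComplex F)) :
    F ∈ hittingSets (powersetCard k univ) fun y => ∂⁺ {y} := by
  intro y hy
  obtain ⟨-, hyk⟩ := mem_powersetCard.1 hy
  obtain ⟨-, f, hfF, hyf⟩ := mem_genComplex.1 (hskel y (card_pos.1 (hyk ▸ hk)) hyk.le)
  have hf := (mem_powersetCard.1 (hF hfF)).2
  exact not_disjoint_iff.2 ⟨f, hfF, mem_upShadow_singleton.2 ⟨hyf, by rw [hf, hyk]⟩⟩

lemma rpProb_eq_bernoulliProb (n t : ℕ) (p : ℝ) (P : Finset (Finset (Fin n)) → Prop) :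
    rpProb n t p P = bernoulliProb (powersetCard t univ) p {F | P (genComplex F)} := by
  have facets_eq : univ.filter (fun s : Finset (Fin n) => #s = t) = powersetCard t univ := by
    ext s
    simp [mem_powersetCard]
  simp [rpProb, facets_eq, bernoulliProb, bernoulliMean_apply, bernoulliWeight,
    Set.indicator_apply]

lemma upShadow_singleton_subset_powersetCard :
    ∀ y ∈ powersetCard k (univ : Finset (Fin n)), ∂⁺ {y} ⊆ powersetCard (k + 1) univ := by
  intro y hy s hs
  rw [mem_powersetCard_univ] at hy ⊢
  rw [(mem_upShadow_singleton.1 hs).2, hy]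

lemma mean_missCount_upShadow (n k : ℕ) (p : ℝ) :
    bernoulliMean (powersetCard (k + 1) (univ : Finset (Fin n))) p
      (missCount (powersetCard k univ) fun y => ∂⁺ {y}) = n.choose k * (1 - p) ^ (n - k) := by
  rw [bernoulliMean_missCount upShadow_singleton_subset_powersetCard,
    sum_congr rfl fun y hy => by rw [card_upShadow_singleton, (mem_powersetCard.1 hy).2]]
  simp

lemma one_sub_le_rpProb_hasCompleteSkeleton (hp : p ∈ Set.Icc 0 1) (hk : k ≤ n) :
    1 - n.choose k * (1 - p) ^ (n - k) ≤ rpProb n (k + 1) p (HasCompleteSkeleton k) := by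
  rw [rpProb_eq_bernoulliProb, ← mean_missCount_upShadow]
  exact (one_sub_mean_missCount_le_prob_hittingSets hp).trans <|
    bernoulliProb_mono hp fun F _ hF => hasCompleteSkeleton_of_mem_hittingSets hk hF

lemma rpProb_hasCompleteSkeleton_mul_le (hp : p ∈ Set.Icc 0 1) (hk : 0 < k) :
    rpProb n (k + 1) p (HasCompleteSkeleton k) * (n.choose k * (1 - p) ^ (n - k)) ≤ n ^ 2 := by
  have hmean : 0 ≤ n.choose k * (1 - p) ^ (n - k) :=
    mul_nonneg (Nat.cast_nonneg _) (pow_nonneg (sub_nonneg.2 hp.2) _)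
  have hdegree : ∀ x ∈ powersetCard k (univ : Finset (Fin n)),
      #{y ∈ powersetCard k univ | ¬ Disjoint (∂⁺ {x}) (∂⁺ {y})} ≤ n ^ 2 := fun x _ => by
    simpa using card_filter_not_disjoint_upShadow_le (powersetCard k univ) x
  have hprob : rpProb n (k + 1) p (HasCompleteSkeleton k) ≤
      bernoulliProb (powersetCard (k + 1) (univ : Finset (Fin n))) p
        (hittingSets (powersetCard k univ) fun y => ∂⁺ {y}) := by
    rw [rpProb_eq_bernoulliProb]
    exact bernoulliProb_mono hp fun F hF => mem_hittingSets_of_hasCompleteSkeleton hk hF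
  refine (mul_le_mul_of_nonneg_right hprob hmean).trans ?_
  rw [← mean_missCount_upShadow]
  exact_mod_cast prob_hittingSets_mul_mean_missCount_le hp
    upShadow_singleton_subset_powersetCard hdegree

end RandomPureComplex

section BinomialMass

variable {c : ℝ} {n k : ℕ}

/-- The probability that a binomial random variable with parameters `n` and `c` equals `k`. -/
def binomialMass (c : ℝ) (n k : ℕ) : ℝ := c ^ k * (1 - c) ^ (n - k) * n.choose k

lemma sum_binomialMass (c : ℝ) (n : ℕ) : ∑ k ∈ range (n + 1), binomialMass c n k = 1 := by
  simp only [binomialMass, ← add_pow, add_sub_cancel, one_pow]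

lemma binomialMass_nonneg (hc : c ∈ Set.Icc 0 1) (n k : ℕ) : 0 ≤ binomialMass c n k :=
  mul_nonneg (mul_nonneg (pow_nonneg hc.1 _) (pow_nonneg (sub_nonneg.2 hc.2) _))
    (Nat.cast_nonneg _)

lemma binomialMass_le_one (hc : c ∈ Set.Icc 0 1) (n k : ℕ) : binomialMass c n k ≤ 1 := by
  rcases le_or_gt k n with hk | hk
  · rw [← sum_binomialMass c n]
    exact single_le_sum (fun j _ => binomialMass_nonneg hc n j) (mem_range_succ_iff.2 hk)
  · simp [binomialMass, Nat.choose_eq_zero_of_lt hk]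

lemma binomialMass_succ_mul (c : ℝ) (n k : ℕ) :
    binomialMass c n (k + 1) * ((k + 1) * (1 - c)) = binomialMass c n k * ((n - k) * c) := by
  rcases lt_trichotomy k n with hk | rfl | hk
  · have hchoose : (n.choose (k + 1) : ℝ) * (k + 1) = n.choose k * (n - k) := by
      rw [← Nat.cast_sub hk.le]
      exact_mod_cast Nat.choose_succ_right_eq n k
    rw [binomialMass, binomialMass, show n - k = n - (k + 1) + 1 by omega, pow_succ, pow_succ]
    linear_combination (c ^ k * c * (1 - c) ^ (n - (k + 1)) * (1 - c)) * hchoose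
  · simp [binomialMass]
  · simp [binomialMass, Nat.choose_eq_zero_of_lt hk,
      Nat.choose_eq_zero_of_lt (Nat.lt_succ_of_lt hk)]

lemma binomialMass_le_succ (hc : c ∈ Set.Ico 0 1) (hk : k + 1 ≤ (n + 1) * c) :
    binomialMass c n k ≤ binomialMass c n (k + 1) := by
  have hpos : 0 < ((k : ℝ) + 1) * (1 - c) := mul_pos (by positivity) (sub_pos.2 hc.2)
  refine le_of_mul_le_mul_right ?_ hpos
  rw [binomialMass_succ_mul c n k]
  exact mul_le_mul_of_nonneg_left (by linarith) (binomialMass_nonneg ⟨hc.1, hc.2.le⟩ n k)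

lemma binomialMass_succ_le (hc : c ∈ Set.Ico 0 1) (hk : (n + 1) * c ≤ k + 1) :
    binomialMass c n (k + 1) ≤ binomialMass c n k := by
  have hpos : 0 < ((k : ℝ) + 1) * (1 - c) := mul_pos (by positivity) (sub_pos.2 hc.2)
  refine le_of_mul_le_mul_right ?_ hpos
  rw [binomialMass_succ_mul c n k]
  exact mul_le_mul_of_nonneg_left (by linarith) (binomialMass_nonneg ⟨hc.1, hc.2.le⟩ n k)

lemma binomialMass_le_mode (hc : c ∈ Set.Ico 0 1) {t : ℕ} (ht : (t : ℝ) ≤ (n + 1) * c)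
    (ht' : (n + 1) * c ≤ t + 1) (k : ℕ) : binomialMass c n k ≤ binomialMass c n t := by
  rcases le_total k t with hkt | htk
  · refine Nat.decreasingInduction' (P := fun k => binomialMass c n k ≤ binomialMass c n t)
      (fun j hjt _ ih => (binomialMass_le_succ hc ?_).trans ih) hkt le_rfl
    exact le_trans (by exact_mod_cast hjt) ht
  · induction k, htk using Nat.le_induction with
    | base => exact le_rfl
    | succ j htj ih =>
      have htj' : (t : ℝ) ≤ j := by exact_mod_cast htj
      exact (binomialMass_succ_le hc (by linarith)).trans ih

lemma one_le_succ_mul_binomialMass_mode (hc : c ∈ Set.Ico 0 1) {t : ℕ}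
    (ht : (t : ℝ) ≤ (n + 1) * c) (ht' : (n + 1) * c ≤ t + 1) :
    1 ≤ (n + 1) * binomialMass c n t := by
  calc 1 = ∑ k ∈ range (n + 1), binomialMass c n k := (sum_binomialMass c n).symm
    _ ≤ ∑ _k ∈ range (n + 1), binomialMass c n t :=
        sum_le_sum fun k _ => binomialMass_le_mode hc ht ht' k
    _ = (n + 1) * binomialMass c n t := by simp

lemma choose_le_choose_succ_mul (hk : k < n) : n.choose k ≤ n.choose (k + 1) * n :=
  calc n.choose k ≤ n.choose k * (n - k) := Nat.le_mul_of_pos_right _ (Nat.sub_pos_of_lt hk)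
    _ = n.choose (k + 1) * (k + 1) := (Nat.choose_succ_right_eq n k).symm
    _ ≤ n.choose (k + 1) * n := Nat.mul_le_mul_left _ hk

lemma choose_succ_le_choose_mul (n k : ℕ) : n.choose (k + 1) ≤ n.choose k * n :=
  calc n.choose (k + 1) ≤ n.choose (k + 1) * (k + 1) := Nat.le_mul_of_pos_right _ k.succ_pos
    _ = n.choose k * (n - k) := Nat.choose_succ_right_eq n k
    _ ≤ n.choose k * n := Nat.mul_le_mul_left _ (Nat.sub_le n k)

end BinomialMass

section Threshold

variable {c q u ε : ℝ} {n t k : ℕ}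

/-- The probability `1 - p` that a given `t`-set is not a facet, at distance `u` from the threshold;
the theorem takes `u = ± q log n`. -/
def absenceProb (c : ℝ) (n : ℕ) (u : ℝ) : ℝ :=
  Real.exp (-entropy c / (1 - c) + u / ((1 - c) * n))

lemma entropy_eq_binEntropy (c : ℝ) : entropy c = Real.binEntropy c := by
  rw [entropy, Real.binEntropy, Real.log_inv, Real.log_inv]
  ring

lemma entropy_pos (hc : c ∈ Set.Ioo 0 1) : 0 < entropy c :=
  entropy_eq_binEntropy c ▸ Real.binEntropy_pos hc.1 hc.2

lemma absenceProb_pos (c : ℝ) (n : ℕ) (u : ℝ) : 0 < absenceProb c n u := Real.exp_pos _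

lemma absenceProb_le_one (hc : c < 1) (hn : 0 < n) (hu : u ≤ entropy c * n) :
    absenceProb c n u ≤ 1 := by
  have hc' : 0 < 1 - c := sub_pos.2 hc
  have hexponent : u / ((1 - c) * n) ≤ entropy c / (1 - c) := by
    rw [div_le_div_iff₀ (by positivity) hc']
    nlinarith
  rw [absenceProb, Real.exp_le_one_iff, neg_div]
  linarith

lemma exp_neg_entropy_div_le_absenceProb (hc : c ≤ 1) (n : ℕ) (hu : 0 ≤ u) :
    Real.exp (-entropy c / (1 - c)) ≤ absenceProb c n u :=
  Real.exp_le_exp.2 <| le_add_of_nonneg_right <|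
    div_nonneg hu (mul_nonneg (sub_nonneg.2 hc) n.cast_nonneg)

lemma pos_of_natCast_eq_mul (ht0 : 0 < t) (ht : (t : ℝ) = c * n) : 0 < n := by
  rcases n.eq_zero_or_pos with rfl | hn
  · simp [ht0.ne'] at ht
  · exact hn

lemma lt_of_natCast_eq_mul (hc : c < 1) (hn : 0 < n) (ht : (t : ℝ) = c * n) : t < n := by
  have hn' : (0 : ℝ) < n := by exact_mod_cast hn
  have htn : (t : ℝ) < n := ht ▸ mul_lt_of_lt_one_left hn' hc
  exact_mod_cast htn

lemma choose_mul_absenceProb_pow (hc : c ∈ Set.Ioo 0 1) (hn : 0 < n) (ht : (t : ℝ) = c * n)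
    (u : ℝ) :
    n.choose t * absenceProb c n u ^ (n - t) = binomialMass c n t * Real.exp u := by
  have hc' : 0 < 1 - c := sub_pos.2 hc.2
  have hpow : absenceProb c n u ^ (n - t) = c ^ t * (1 - c) ^ (n - t) * Real.exp u := by
    have hexponent : ((n - t : ℕ) : ℝ) * (-entropy c / (1 - c) + u / ((1 - c) * n)) =
        t * Real.log c + (n - t : ℕ) * Real.log (1 - c) + u := by
      rw [Nat.cast_sub (lt_of_natCast_eq_mul hc.2 hn ht).le, ht, entropy]
      field_simp
      ring
    rw [absenceProb, ← Real.exp_nat_mul, hexponent, Real.exp_add, Real.exp_add, Real.exp_nat_mul,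
      Real.exp_nat_mul, Real.exp_log hc.1, Real.exp_log hc']
  rw [hpow, binomialMass]
  ring

lemma one_le_succ_mul_binomialMass (hc : c ∈ Set.Ioo 0 1) (ht : (t : ℝ) = c * n) :
    1 ≤ (n + 1) * binomialMass c n t :=
  one_le_succ_mul_binomialMass_mode ⟨hc.1.le, hc.2⟩ (by linarith [hc.1]) (by linarith [hc.2])

lemma choose_mul_absenceProb_pow_le (hc : c ∈ Set.Ioo 0 1)
    (hk : ((k + 1 : ℕ) : ℝ) = c * n) (hu : u ≤ entropy c * n) :
    n.choose k * absenceProb c n u ^ (n - k) ≤ n * Real.exp u := by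
  have hn := pos_of_natCast_eq_mul k.succ_pos hk
  have hkn := lt_of_natCast_eq_mul hc.2 hn hk
  have hr := (absenceProb_pos c n u).le
  have hchoose : (n.choose k : ℝ) ≤ n.choose (k + 1) * n := by
    exact_mod_cast choose_le_choose_succ_mul (by omega)
  calc n.choose k * absenceProb c n u ^ (n - k)
      ≤ (n.choose (k + 1) * n) * absenceProb c n u ^ (n - (k + 1)) :=
        mul_le_mul hchoose
          (pow_le_pow_of_le_one hr (absenceProb_le_one hc.2 hn hu) (by omega))
          (by positivity) (by positivity)
    _ = binomialMass c n (k + 1) * (n * Real.exp u) := by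
        linear_combination (n : ℝ) * choose_mul_absenceProb_pow hc hn hk u
    _ ≤ n * Real.exp u :=
        mul_le_of_le_one_left (by positivity)
          (binomialMass_le_one ⟨hc.1.le, hc.2.le⟩ n _)

lemma absenceProb_mul_exp_le (hc : c ∈ Set.Ioo 0 1)
    (hk : ((k + 1 : ℕ) : ℝ) = c * n) (u : ℝ) :
    absenceProb c n u * Real.exp u ≤
      n * (n + 1) * (n.choose k * absenceProb c n u ^ (n - k)) := by
  have hn := pos_of_natCast_eq_mul k.succ_pos hk
  have hkn := lt_of_natCast_eq_mul hc.2 hn hk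
  have hr := absenceProb_pos c n u
  have hchoose : (n.choose (k + 1) : ℝ) ≤ n.choose k * n := by
    exact_mod_cast choose_succ_le_choose_mul n k
  calc absenceProb c n u * Real.exp u
      ≤ (n + 1) * binomialMass c n (k + 1) * (absenceProb c n u * Real.exp u) :=
        le_mul_of_one_le_left (by positivity) (one_le_succ_mul_binomialMass hc hk)
    _ = n.choose (k + 1) * ((n + 1) * absenceProb c n u ^ (n - k)) := by
        rw [show n - k = n - (k + 1) + 1 by omega, pow_succ]
        linear_combination -((n + 1) * absenceProb c n u) *
          choose_mul_absenceProb_pow hc hn hk u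
    _ ≤ (n.choose k * n) * ((n + 1) * absenceProb c n u ^ (n - k)) :=
        mul_le_mul_of_nonneg_right hchoose (by positivity)
    _ = n * (n + 1) * (n.choose k * absenceProb c n u ^ (n - k)) := by ring

lemma one_sub_absenceProb_mem_Icc (hc : c < 1) (hn : 0 < n) (hu : u ≤ entropy c * n) :
    1 - absenceProb c n u ∈ Set.Icc (0 : ℝ) 1 :=
  ⟨sub_nonneg.2 (absenceProb_le_one hc hn hu), sub_le_self _ (absenceProb_pos c n u).le⟩

lemma one_sub_mul_exp_le_rpProb (hc : c ∈ Set.Ioo 0 1) (hn : 0 < n) (ht : (t : ℝ) = c * n)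
    (hu : u ≤ entropy c * n) :
    1 - n * Real.exp u ≤ rpProb n t (1 - absenceProb c n u) (HasCompleteSkeleton (t - 1)) := by
  have ht0 : 0 < t := by
    have hpos : (0 : ℝ) < t := ht ▸ mul_pos hc.1 (by exact_mod_cast hn)
    exact_mod_cast hpos
  obtain ⟨k, rfl⟩ : ∃ k, t = k + 1 := ⟨t - 1, by omega⟩
  have hkn := lt_of_natCast_eq_mul hc.2 hn ht
  have markov := one_sub_le_rpProb_hasCompleteSkeleton
    (one_sub_absenceProb_mem_Icc hc.2 hn hu) (Nat.le_of_succ_le hkn.le)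
  rw [sub_sub_cancel] at markov
  exact (sub_le_sub_left (choose_mul_absenceProb_pow_le hc ht hu) 1).trans markov

lemma rpProb_mul_exp_le (hc : c ∈ Set.Ioo 0 1) (ht : (t : ℝ) = c * n) (ht2 : 2 ≤ t)
    (hu0 : 0 ≤ u) (hu : u ≤ entropy c * n) :
    rpProb n t (1 - absenceProb c n u) (HasCompleteSkeleton (t - 1)) *
      (Real.exp (-entropy c / (1 - c)) * Real.exp u) ≤ n ^ 3 * (n + 1) := by
  obtain ⟨k, rfl⟩ : ∃ k, t = k + 1 := ⟨t - 1, by omega⟩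
  have hn := pos_of_natCast_eq_mul k.succ_pos ht
  have hp := one_sub_absenceProb_mem_Icc hc.2 hn hu
  have chebyshev := rpProb_hasCompleteSkeleton_mul_le (n := n) hp (k := k) (by omega)
  rw [sub_sub_cancel] at chebyshev
  rw [Nat.add_sub_cancel]
  set P := rpProb n (k + 1) (1 - absenceProb c n u) (HasCompleteSkeleton k) with hP
  have hP0 : 0 ≤ P := by
    rw [hP, rpProb_eq_bernoulliProb]
    exact bernoulliProb_nonneg hp _
  calc P * (Real.exp (-entropy c / (1 - c)) * Real.exp u)
      ≤ P * (absenceProb c n u * Real.exp u) := by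
        gcongr
        exact exp_neg_entropy_div_le_absenceProb hc.2.le n hu0
    _ ≤ P * (n * (n + 1) * (n.choose k * absenceProb c n u ^ (n - k))) :=
        mul_le_mul_of_nonneg_left (absenceProb_mul_exp_le hc ht u) hP0
    _ = n * (n + 1) * (P * (n.choose k * absenceProb c n u ^ (n - k))) := by ring
    _ ≤ n * (n + 1) * n ^ 2 := by gcongr
    _ = n ^ 3 * (n + 1) := by ring

lemma tendsto_log_natCast : Tendsto (fun n : ℕ => Real.log n) atTop atTop :=
  Real.tendsto_log_atTop.comp tendsto_natCast_atTop_atTop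

lemma eventually_mul_log_le (q : ℝ) {a : ℝ} (ha : 0 < a) :
    ∀ᶠ n : ℕ in atTop, q * Real.log n ≤ a * n := by
  have hlittle := (Real.isLittleO_log_id_atTop.const_mul_left q).comp_tendsto
    (tendsto_natCast_atTop_atTop (R := ℝ))
  filter_upwards [hlittle.def ha] with n hn
  simpa using (le_abs_self _).trans hn

lemma eventually_mul_exp_neg_mul_log_le (hq : 1 < q) (hε : 0 < ε) :
    ∀ᶠ n : ℕ in atTop, n * Real.exp (-(q * Real.log n)) ≤ ε := by
  have htendsto : Tendsto (fun n : ℕ => Real.exp ((1 - q) * Real.log n)) atTop (𝓝 0) :=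
    Real.tendsto_exp_atBot.comp <| tendsto_log_natCast.const_mul_atTop_of_neg (sub_neg.2 hq)
  filter_upwards [htendsto.eventually_le_const hε, eventually_gt_atTop 0] with n hle hn
  calc n * Real.exp (-(q * Real.log n))
      = Real.exp (Real.log n) * Real.exp (-(q * Real.log n)) := by
        rw [Real.exp_log (by exact_mod_cast hn)]
    _ = Real.exp ((1 - q) * Real.log n) := by
        rw [← Real.exp_add]
        ring_nf
    _ ≤ ε := hle

lemma eventually_pow_mul_succ_le_mul_exp_mul_log (hq : 4 < q) {a : ℝ} (ha : 0 < a) :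
    ∀ᶠ n : ℕ in atTop, (n : ℝ) ^ 3 * (n + 1) ≤ a * Real.exp (q * Real.log n) := by
  have htendsto : Tendsto (fun n : ℕ => Real.exp ((q - 4) * Real.log n)) atTop atTop :=
    Real.tendsto_exp_atTop.comp <| tendsto_log_natCast.const_mul_atTop (sub_pos.2 hq)
  filter_upwards [htendsto.eventually_ge_atTop (2 / a), eventually_gt_atTop 0] with n hge hn
  have hn1 : (1 : ℝ) ≤ n := by exact_mod_cast hn
  calc (n : ℝ) ^ 3 * (n + 1) ≤ n ^ 3 * (n + n) := by gcongr
    _ = 2 * (n : ℝ) ^ 4 := by ring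
    _ ≤ (a * Real.exp ((q - 4) * Real.log n)) * n ^ 4 := by
        gcongr
        exact (div_le_iff₀' ha).1 hge
    _ = a * (Real.exp ((q - 4) * Real.log n) * Real.exp ((4 : ℕ) * Real.log n)) := by
        rw [Real.exp_nat_mul, Real.exp_log (by linarith), mul_assoc]
    _ = a * Real.exp (q * Real.log n) := by
        rw [← Real.exp_add]
        push_cast
        ring_nf

lemma eventually_one_sub_le_rpProb (hc : c ∈ Set.Ioo 0 1) (hq : 1 < q) (hε : 0 < ε) :
    ∀ᶠ n : ℕ in atTop, ∀ t : ℕ, (t : ℝ) = c * n →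
      1 - ε ≤ rpProb n t (1 - absenceProb c n (-(q * Real.log n)))
        (HasCompleteSkeleton (t - 1)) := by
  filter_upwards [eventually_mul_exp_neg_mul_log_le hq hε, eventually_gt_atTop 0]
    with n hle hn t ht
  have hu : -(q * Real.log n) ≤ entropy c * n :=
    calc -(q * Real.log n) ≤ 0 := neg_nonpos.2 (by positivity)
      _ ≤ entropy c * n := mul_nonneg (entropy_pos hc).le n.cast_nonneg
  exact (sub_le_sub_left hle 1).trans (one_sub_mul_exp_le_rpProb hc hn ht hu)

lemma eventually_rpProb_le (hc : c ∈ Set.Ioo 0 1) (hq : 4 < q) (hε : 0 < ε) :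
    ∀ᶠ n : ℕ in atTop, ∀ t : ℕ, (t : ℝ) = c * n →
      rpProb n t (1 - absenceProb c n (q * Real.log n)) (HasCompleteSkeleton (t - 1)) ≤ ε := by
  have hr := Real.exp_pos (-entropy c / (1 - c))
  filter_upwards [eventually_mul_log_le q (entropy_pos hc),
    eventually_pow_mul_succ_le_mul_exp_mul_log hq (mul_pos hε hr),
    tendsto_natCast_atTop_atTop.eventually_ge_atTop (2 / c)] with n hu hle hnc t ht
  have ht2 : 2 ≤ t := by
    have h2 : (2 : ℝ) ≤ t := ht ▸ (div_le_iff₀' hc.1).1 hnc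
    exact_mod_cast h2
  refine le_of_mul_le_mul_right ?_ (mul_pos hr (Real.exp_pos (q * Real.log n)))
  rw [← mul_assoc ε]
  exact (rpProb_mul_exp_le hc ht ht2 (by positivity) hu).trans hle

end Threshold

/-- For a constant `0 < c < 1`, there is a constant `q > 0` such that, for
`t = cn` and `t' = t - 1`: with `p = 1 - exp(-α(c)/(1-c) - q log n/((1-c)n))`,
`Δ ~ RP(n,t,p)` has a complete `t'`-skeleton with high probability, while with
`p = 1 - exp(-α(c)/(1-c) + q log n/((1-c)n))` it with high probability does
not. -/
theorem stmt3 (c : ℝ) (hc0 : 0 < c) (hc1 : c < 1) :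
    ∃ q : ℝ, 0 < q ∧
      ((∀ ε : ℝ, 0 < ε → ∃ N : ℕ, ∀ n : ℕ, N ≤ n → ∀ t : ℕ, (t : ℝ) = c * n →
          1 - ε ≤ rpProb n t
            (1 - Real.exp (-entropy c / (1 - c) - q * Real.log n / ((1 - c) * n)))
            (fun Δ => ∀ x : Finset (Fin n), x.Nonempty → x.card ≤ t - 1 → x ∈ Δ)) ∧
        (∀ ε : ℝ, 0 < ε → ∃ N : ℕ, ∀ n : ℕ, N ≤ n → ∀ t : ℕ, (t : ℝ) = c * n →
          rpProb n t
            (1 - Real.exp (-entropy c / (1 - c) + q * Real.log n / ((1 - c) * n)))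
            (fun Δ => ∀ x : Finset (Fin n), x.Nonempty → x.card ≤ t - 1 → x ∈ Δ) ≤ ε)) := by
  have hc : c ∈ Set.Ioo 0 1 := ⟨hc0, hc1⟩
  refine ⟨5, by norm_num, fun ε hε => ?_, fun ε hε => ?_⟩
  · obtain ⟨N, hN⟩ := eventually_atTop.1 (eventually_one_sub_le_rpProb hc (q := 5) (by norm_num) hε)
    refine ⟨N, fun n hn t ht => ?_⟩
    rw [sub_eq_add_neg (-entropy c / (1 - c)), ← neg_div]
    exact hN n hn t ht
  · exact eventually_atTop.1 (eventually_rpProb_le hc (by norm_num) hε)
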